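/- For every positive integer N there exists a connected 4-regular graph G of order n ≥ N such that ι(G) ≥ n/4. -/

import Mathlib

open Classical

/-- The closed neighborhood `N[D]` of a set `D` of vertices. -/
def closedNbhd {V : Type*} (G : SimpleGraph V) (D : Set V) : Set V :=
  {v | v ∈ D ∨ ∃ u ∈ D, G.Adj u v}

/-- `S` is an isolating set of `G`: deleting `N[S]` leaves no edge. -/
def IsIsolatingSet {V : Type*} (G : SimpleGraph V) (S : Set V) : Prop :=
  ∀ u v : V, G.Adj u v → u ∈ closedNbhd G S ∨ v ∈ closedNbhd G S

/-- The isolation number: the minimum cardinality of an isolating set. -/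
noncomputable def isolationNumber {V : Type*} [Fintype V] (G : SimpleGraph V) : ℕ :=
  sInf {k | ∃ S : Set V, IsIsolatingSet G S ∧ S.ncard = k}

/-!
The complement of the 7-cycle is 4-regular, and the two vertices that a vertex `t` does not
dominate, `t - 1` and `t + 1`, are adjacent. Subdivide its edge `{0, 3}` by a new vertex, the hub.
The seven old vertices keep degree 4, and still no single vertex dominates an endpoint of every edge
that avoids the hub: `t` misses the edge `{t - 1, t + 1}`, which survives because its ends are at
distance 2 on the 7-cycle whereas `0` and `3` are at distance 3, and the hub misses `{1, 4}`. Now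
take copies of this 8-vertex gadget and join their hubs, which have degree 2, in a long cycle. The
result is connected and 4-regular, and a vertex of one copy dominates no non-hub vertex of another,
so an isolating set has at least two vertices in each copy.
-/

section Isolation

variable {V W : Type*} {G : SimpleGraph V} {H : SimpleGraph W}

lemma mem_closedNbhd_singleton {t v : V} : v ∈ closedNbhd G {t} ↔ v = t ∨ G.Adj t v := by
  simp [closedNbhd]

lemma closedNbhd_mono {S T : Set V} (hST : S ⊆ T) : closedNbhd G S ⊆ closedNbhd G T :=
  fun _ hv => hv.imp (fun h => hST h) fun ⟨u, hu, huv⟩ => ⟨u, hST hu, huv⟩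

lemma apply_mem_closedNbhd_image (φ : G →g H) {S : Set V} {v : V} (hv : v ∈ closedNbhd G S) :
    φ v ∈ closedNbhd H (φ '' S) :=
  hv.imp (Set.mem_image_of_mem φ) fun ⟨u, hu, huv⟩ =>
    ⟨φ u, Set.mem_image_of_mem φ hu, φ.map_adj huv⟩

lemma IsIsolatingSet.image (φ : G ≃g H) {S : Set V} (hS : IsIsolatingSet G S) :
    IsIsolatingSet H (φ '' S) := by
  intro u v huv
  have h := hS (φ.symm u) (φ.symm v) (φ.symm.map_adj_iff.2 huv)
  refine h.imp (fun hu => ?_) fun hv => ?_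
  · simpa using apply_mem_closedNbhd_image φ.toHom hu
  · simpa using apply_mem_closedNbhd_image φ.toHom hv

lemma isIsolatingSet_univ (G : SimpleGraph V) : IsIsolatingSet G Set.univ :=
  fun _ _ _ => Or.inl (Or.inl trivial)

variable [Fintype V] [Fintype W]

lemma le_isolationNumber {k : ℕ} (h : ∀ S, IsIsolatingSet G S → k ≤ S.ncard) :
    k ≤ isolationNumber G := by
  refine le_csInf ⟨_, Set.univ, isIsolatingSet_univ G, rfl⟩ ?_
  rintro _ ⟨S, hS, rfl⟩
  exact h S hS

lemma isolationNumber_le_of_iso (φ : G ≃g H) : isolationNumber H ≤ isolationNumber G :=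
  le_isolationNumber fun S hS =>
    Nat.sInf_le ⟨φ '' S, hS.image φ, Set.ncard_image_of_injective S φ.injective⟩

end Isolation

section IsolatesOff

variable {V : Type*} {G : SimpleGraph V}

/-- `T` isolates `G` off the vertex `r`: every edge of `G` that avoids `r` has an endpoint in
`N[T]`. This is the trace that an isolating set of a rooted product leaves on each copy of `G`; the
root `r` may belong to `T`, and `N[T]` is taken in `G`. -/
def IsolatesOff (G : SimpleGraph V) (r : V) (T : Set V) : Prop :=
  ∀ x y, x ≠ r → y ≠ r → G.Adj x y → x ∈ closedNbhd G T ∨ y ∈ closedNbhd G T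

lemma IsolatesOff.mono {r : V} {S T : Set V} (hS : IsolatesOff G r S) (hST : S ⊆ T) :
    IsolatesOff G r T :=
  fun x y hx hy hxy => (hS x y hx hy hxy).imp (fun h => closedNbhd_mono hST h)
    fun h => closedNbhd_mono hST h

lemma IsolatesOff.two_le_ncard [Finite V] {r : V} (hr : ∀ t, ¬ IsolatesOff G r {t}) {T : Set V}
    (hT : IsolatesOff G r T) : 2 ≤ T.ncard := by
  by_contra! hlt
  have : Nonempty V := ⟨r⟩
  obtain ⟨t, hTt⟩ := (Set.ncard_le_one_iff_subset_singleton (s := T)).1 (by lia)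
  exact hr t (hT.mono hTt)

end IsolatesOff

section RootedProduct

variable {I V : Type*}

/-- The rooted product of `C` with `(H, r)`: one copy of `H` for each vertex of `C`, where the
copies of the root `r` are joined as in `C`. -/
def rootedProduct (C : SimpleGraph I) (H : SimpleGraph V) (r : V) : SimpleGraph (I × V) where
  Adj p q := (p.1 = q.1 ∧ H.Adj p.2 q.2) ∨ (p.2 = r ∧ q.2 = r ∧ C.Adj p.1 q.1)
  symm := ⟨fun _ _ h => h.imp (fun ⟨hi, hx⟩ => ⟨hi.symm, hx.symm⟩)
    fun ⟨hp, hq, hC⟩ => ⟨hq, hp, hC.symm⟩⟩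
  loopless := ⟨fun _ h => h.elim (fun ⟨_, hx⟩ => hx.ne rfl) fun ⟨_, _, hC⟩ => hC.ne rfl⟩

variable {C : SimpleGraph I} {H : SimpleGraph V} {r : V}

lemma rootedProduct_connected (hC : C.Connected) (hH : H.Connected) :
    (rootedProduct C H r).Connected := by
  have reachable_copy (i x y) : (rootedProduct C H r).Reachable (i, x) (i, y) :=
    (hH x y).map ⟨fun z => (i, z), fun h => Or.inl ⟨rfl, h⟩⟩
  have reachable_roots (i j) : (rootedProduct C H r).Reachable (i, r) (j, r) :=
    (hC i j).map ⟨fun l => (l, r), fun h => Or.inr ⟨rfl, rfl, h⟩⟩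
  have := hC.nonempty
  have := hH.nonempty
  exact ⟨fun ⟨i, x⟩ ⟨j, y⟩ =>
    (reachable_copy i x r).trans ((reachable_roots i j).trans (reachable_copy j r y))⟩

lemma neighborSet_rootedProduct_of_ne {x : V} (hx : x ≠ r) (i : I) :
    (rootedProduct C H r).neighborSet (i, x) = Prod.mk i '' H.neighborSet x := by
  ext ⟨j, y⟩
  simp only [rootedProduct, SimpleGraph.mem_neighborSet, Set.mem_image, Prod.mk.injEq]
  grind

lemma neighborSet_rootedProduct_root (i : I) :
    (rootedProduct C H r).neighborSet (i, r) =
      Prod.mk i '' H.neighborSet r ∪ (fun j => (j, r)) '' C.neighborSet i := by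
  ext ⟨j, y⟩
  simp only [rootedProduct, SimpleGraph.mem_neighborSet, Set.mem_union, Set.mem_image,
    Prod.mk.injEq]
  grind

lemma encard_neighborSet_rootedProduct_of_ne {x : V} (hx : x ≠ r) (i : I) :
    ((rootedProduct C H r).neighborSet (i, x)).encard = (H.neighborSet x).encard := by
  rw [neighborSet_rootedProduct_of_ne hx, (Prod.mk_right_injective i).encard_image]

lemma encard_neighborSet_rootedProduct_root (i : I) :
    ((rootedProduct C H r).neighborSet (i, r)).encard =
      (H.neighborSet r).encard + (C.neighborSet i).encard := by
  have hdisj : Disjoint (Prod.mk i '' H.neighborSet r) ((fun j => (j, r)) '' C.neighborSet i) := by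
    rw [Set.disjoint_left]
    rintro _ ⟨x, hx, rfl⟩ ⟨j, -, hj⟩
    obtain rfl : r = x := congrArg Prod.snd hj
    exact hx.ne rfl
  rw [neighborSet_rootedProduct_root, Set.encard_union_eq hdisj,
    (Prod.mk_right_injective i).encard_image, (Prod.mk_left_injective r).encard_image]

lemma mem_closedNbhd_fiber {S : Set (I × V)} {i : I} {x : V} (hx : x ≠ r)
    (h : (i, x) ∈ closedNbhd (rootedProduct C H r) S) : x ∈ closedNbhd H (Prod.mk i ⁻¹' S) := by
  rcases h with hS | ⟨⟨j, y⟩, hS, ⟨rfl, hyx⟩ | ⟨-, hxr, -⟩⟩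
  · exact Or.inl hS
  · exact Or.inr ⟨y, hS, hyx⟩
  · exact absurd hxr hx

lemma IsIsolatingSet.isolatesOff_fiber {S : Set (I × V)}
    (hS : IsIsolatingSet (rootedProduct C H r) S) (i : I) :
    IsolatesOff H r (Prod.mk i ⁻¹' S) :=
  fun x y hx hy hxy => (hS (i, x) (i, y) (Or.inl ⟨rfl, hxy⟩)).imp (mem_closedNbhd_fiber hx)
    (mem_closedNbhd_fiber hy)

lemma ncard_eq_sum_ncard_fiber [Fintype I] [Finite V] (S : Set (I × V)) :
    S.ncard = ∑ i, (Prod.mk i ⁻¹' S).ncard :=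
  (Nat.card_congr (Equiv.setProdEquivSigma S)).trans Nat.card_sigma

lemma card_mul_le_isolationNumber_rootedProduct [Fintype I] [Fintype V] {m : ℕ}
    (hm : ∀ T, IsolatesOff H r T → m ≤ T.ncard) :
    Fintype.card I * m ≤ isolationNumber (rootedProduct C H r) := by
  refine le_isolationNumber fun S hS => ?_
  rw [ncard_eq_sum_ncard_fiber, ← smul_eq_mul]
  exact Finset.card_nsmul_le_sum _ _ _ fun i _ => hm _ (hS.isolatesOff_fiber i)

end RootedProduct

section SubdivideEdge

variable {V : Type*}

/-- The graph obtained from `K` by subdividing the edge `e` once; `none` is the new vertex. -/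
def subdivideEdge (K : SimpleGraph V) (e : Sym2 V) : SimpleGraph (Option V) where
  Adj
    | some x, some y => K.Adj x y ∧ s(x, y) ≠ e
    | some x, none => x ∈ e
    | none, some y => y ∈ e
    | none, none => False
  symm := ⟨by
    rintro (_ | x) (_ | y) h
    exacts [h, h, h, ⟨h.1.symm, Sym2.eq_swap.trans_ne h.2⟩]⟩
  loopless := ⟨by
    rintro (_ | x) h
    exacts [h, h.1.ne rfl]⟩

variable {K : SimpleGraph V} {e : Sym2 V}

@[simp]
lemma subdivideEdge_adj_some_some {x y : V} :
    (subdivideEdge K e).Adj (some x) (some y) ↔ K.Adj x y ∧ s(x, y) ≠ e := Iff.rfl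

@[simp]
lemma subdivideEdge_adj_some_none {x : V} : (subdivideEdge K e).Adj (some x) none ↔ x ∈ e := Iff.rfl

@[simp]
lemma subdivideEdge_adj_none_some {y : V} : (subdivideEdge K e).Adj none (some y) ↔ y ∈ e := Iff.rfl

lemma subdivideEdge_reachable_of_adj {x y : V} (hxy : K.Adj x y) :
    (subdivideEdge K e).Reachable (some x) (some y) := by
  by_cases he : s(x, y) = e
  · subst he
    have hx : (subdivideEdge K s(x, y)).Adj (some x) none := Sym2.mem_mk_left x y
    have hy : (subdivideEdge K s(x, y)).Adj none (some y) := Sym2.mem_mk_right x y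
    exact hx.reachable.trans hy.reachable
  · exact SimpleGraph.Adj.reachable ⟨hxy, he⟩

lemma subdivideEdge_connected (hK : K.Connected) : (subdivideEdge K e).Connected := by
  have reachable_some (x y : V) : (subdivideEdge K e).Reachable (some x) (some y) := by
    obtain ⟨p⟩ := hK x y
    induction p with
    | nil => rfl
    | cons hxy _ ih => exact (subdivideEdge_reachable_of_adj hxy).trans ih
  have reachable_none : (subdivideEdge K e).Reachable (some e.out.1) none :=
    SimpleGraph.Adj.reachable e.out_fst_mem
  refine (SimpleGraph.connected_iff_exists_forall_reachable _).2 ⟨some e.out.1, ?_⟩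
  rintro (_ | y)
  exacts [reachable_none, reachable_some _ y]

lemma encard_neighborSet_subdivideEdge_none (he : ¬ e.IsDiag) :
    ((subdivideEdge K e).neighborSet none).encard = 2 := by
  induction e with | _ a b =>
  have hab : some a ≠ some b := fun h => he (Option.some_injective _ h)
  have hnbr : (subdivideEdge K s(a, b)).neighborSet none = {some a, some b} := by
    ext (_ | y) <;> simp
  rw [hnbr, Set.encard_pair hab]

lemma encard_neighborSet_subdivideEdge_some (he : e ∈ K.edgeSet) (x : V) :
    ((subdivideEdge K e).neighborSet (some x)).encard = (K.neighborSet x).encard := by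
  by_cases hx : x ∈ e
  · obtain ⟨y, rfl⟩ := hx
    have hxy : K.Adj x y := he
    have hnbr : (subdivideEdge K s(x, y)).neighborSet (some x) =
        insert none (some '' (K.neighborSet x \ {y})) := by
      ext (_ | z) <;> simp [hxy.ne]
    rw [hnbr, Set.encard_insert_of_notMem (by simp), (Option.some_injective V).encard_image,
      Set.encard_sdiff_singleton_add_one ((K.mem_neighborSet x y).2 hxy)]
  · have hnbr : (subdivideEdge K e).neighborSet (some x) = some '' K.neighborSet x := by
      ext (_ | z)
      · simpa using hx
      · have hz : s(x, z) ≠ e := fun h => hx (h ▸ Sym2.mem_mk_left x z)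
        simp [hz]
    rw [hnbr, (Option.some_injective V).encard_image]

end SubdivideEdge

section Gadget

lemma encard_neighborSet_of_isRegularOfDegree {V : Type*} {G : SimpleGraph V} [G.LocallyFinite]
    {d : ℕ} (hG : G.IsRegularOfDegree d) (v : V) : (G.neighborSet v).encard = d := by
  rw [← hG v, ← G.coe_neighborFinset, Set.encard_coe_eq_coe_finsetCard,
    G.card_neighborFinset_eq_degree]

lemma cycleGraph_isRegularOfDegree_two (k : ℕ) :
    (SimpleGraph.cycleGraph (k + 3)).IsRegularOfDegree 2 :=
  fun _ => SimpleGraph.cycleGraph_degree_three_le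

lemma cycleGraph_seven_compl_connected : (SimpleGraph.cycleGraph 7)ᶜ.Connected := by
  decide

/-- The complement of the 7-cycle with the edge `{0, 3}` subdivided; `none` is the hub through which
the copies of the gadget are linked. -/
def gadget : SimpleGraph (Option (Fin 7)) :=
  subdivideEdge (SimpleGraph.cycleGraph 7)ᶜ s(0, 3)

lemma gadget_connected : gadget.Connected :=
  subdivideEdge_connected cycleGraph_seven_compl_connected

lemma encard_neighborSet_gadget_none : (gadget.neighborSet none).encard = 2 :=
  encard_neighborSet_subdivideEdge_none (by decide)

lemma encard_neighborSet_gadget_some (x : Fin 7) : (gadget.neighborSet (some x)).encard = 4 := by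
  have hreg := (cycleGraph_isRegularOfDegree_two 4).compl
  exact (encard_neighborSet_subdivideEdge_some (by decide) x).trans
    (encard_neighborSet_of_isRegularOfDegree hreg x)

lemma not_isolatesOff_gadget_singleton (t : Option (Fin 7)) : ¬ IsolatesOff gadget none {t} := by
  suffices h : ∃ x y, gadget.Adj (some x) (some y) ∧ some x ∉ closedNbhd gadget {t} ∧
      some y ∉ closedNbhd gadget {t} by
    obtain ⟨x, y, hxy, hx, hy⟩ := h
    exact fun hT => (hT _ _ (by simp) (by simp) hxy).elim hx hy
  simp only [mem_closedNbhd_singleton]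
  rcases t with _ | t
  · refine ⟨1, 4, ?_⟩
    simp only [gadget, subdivideEdge_adj_some_some, subdivideEdge_adj_none_some]
    decide
  · refine ⟨t - 1, t + 1, ?_⟩
    simp only [gadget, subdivideEdge_adj_some_some, Option.some_inj]
    revert t
    decide

end Gadget

section GadgetRing

/-- The ring of `k + 3` gadgets whose hubs are joined in a cycle. The offset `3` makes
`cycleGraph (k + 3)` 2-regular. -/
def gadgetRing (k : ℕ) : SimpleGraph (Fin (k + 3) × Option (Fin 7)) :=
  rootedProduct (SimpleGraph.cycleGraph (k + 3)) gadget none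

lemma gadgetRing_connected (k : ℕ) : (gadgetRing k).Connected :=
  rootedProduct_connected SimpleGraph.cycleGraph_connected gadget_connected

lemma encard_neighborSet_gadgetRing (k : ℕ) (v : Fin (k + 3) × Option (Fin 7)) :
    ((gadgetRing k).neighborSet v).encard = 4 := by
  obtain ⟨i, _ | x⟩ := v
  · rw [gadgetRing, encard_neighborSet_rootedProduct_root, encard_neighborSet_gadget_none,
      encard_neighborSet_of_isRegularOfDegree (cycleGraph_isRegularOfDegree_two k)]
    norm_num
  · rw [gadgetRing, encard_neighborSet_rootedProduct_of_ne (Option.some_ne_none x),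
      encard_neighborSet_gadget_some]

lemma mul_two_le_isolationNumber_gadgetRing (k : ℕ) :
    (k + 3) * 2 ≤ isolationNumber (gadgetRing k) := by
  have h := card_mul_le_isolationNumber_rootedProduct (C := SimpleGraph.cycleGraph (k + 3))
    fun T hT => hT.two_le_ncard not_isolatesOff_gadget_singleton
  rwa [Fintype.card_fin] at h

end GadgetRing

/-- There are arbitrarily large connected 4-regular graphs with isolation number
at least a quarter of their order. -/
theorem exists_four_regular_isolation_ge_quarter (N : ℕ) (hN : 0 < N) :
    ∃ (n : ℕ) (G : SimpleGraph (Fin n)), N ≤ n ∧ G.Connected ∧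
      (∀ v : Fin n, (G.neighborSet v).ncard = 4) ∧
      (n : ℝ) / 4 ≤ (isolationNumber G : ℝ) := by
  have hcard : Fintype.card (Fin (N + 3) × Option (Fin 7)) = (N + 3) * 8 := by simp
  let φ := ((gadgetRing N).overFinIso hcard).symm
  refine ⟨(N + 3) * 8, (gadgetRing N).overFin hcard, by lia,
    φ.connected_iff.2 (gadgetRing_connected N), fun v => ?_, ?_⟩
  · calc (((gadgetRing N).overFin hcard).neighborSet v).ncard
        = ((gadgetRing N).neighborSet (φ v)).ncard := Nat.card_congr (φ.mapNeighborSet v)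
      _ = 4 := by rw [Set.ncard_def, encard_neighborSet_gadgetRing]; rfl
  · have hι : (N + 3) * 2 ≤ isolationNumber ((gadgetRing N).overFin hcard) :=
      (mul_two_le_isolationNumber_gadgetRing N).trans (isolationNumber_le_of_iso φ)
    have hι' : ((N : ℝ) + 3) * 2 ≤ isolationNumber ((gadgetRing N).overFin hcard) := by
      exact_mod_cast hι
    push_cast
    linarith
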